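/- Proposition: Let (α_n)_{n∈ℕ} be matrices in ℍ^{N×N} with Σ_n ‖α_n‖ ρⁿ < ∞ and with α₀ invertible, and define b_{n,m} := Σ_{i=0}^{n} Σ_{j=0}^{m} α_i a_{n−i,m−j} α_j* ∈ ℍ^{N×N} (these are the coefficients of the kernel B(p,q) = α(p) ⋆ K(p,q) ⋆_r α(q)*, where α(p) = Σ_n pⁿ α_n). Then b_{n,m} = b_{m,n}*, the series Σ_{n,m} ‖b_{n,m}‖ ρ^{n+m} converges, and for every κ ∈ ℕ the kernel B(p,q) := Σ_{n,m≥0} pⁿ b_{n,m} q̄^m has κ negative squares in B_ρ if and only if K(p,q) has κ negative squares in B_ρ. -/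

import Mathlib

/- Setting: quaternionic hermitian kernels of the form `K(p,q) = Σ pⁿ a_{n,m} q̄^m`.
Column vectors `ι → ℍ` form a right `ℍ`-vector space (a module over `ℍᵐᵒᵖ`).  For a
Hermitian matrix `H`, `v* H v = star v ⬝ᵥ H.mulVec v` is real, and the negativity
index `ν₋(H)` is the largest dimension of a right subspace on which the quadratic
form `v ↦ (v* H v).re` is negative definite. -/

open Quaternion MulOpposite Matrix

attribute [local instance] Matrix.normedAddCommGroup

/-- The negativity index `ν₋(H)`: the largest dimension of a right `ℍ`-subspace on
which the Hermitian form of `H` is strictly negative. -/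
noncomputable def negIndex {ι : Type*} [Fintype ι] (H : Matrix ι ι ℍ[ℝ]) : ℕ :=
  sSup {d : ℕ | ∃ W : Submodule ℍ[ℝ]ᵐᵒᵖ (ι → ℍ[ℝ]),
      Module.finrank ℍ[ℝ]ᵐᵒᵖ W = d ∧
      ∀ v ∈ W, v ≠ 0 → (star v ⬝ᵥ H.mulVec v).re < 0}

/-- The kernel `K(p,q) = Σ_{n,m≥0} pⁿ a_{n,m} q̄^m` built from the coefficient
matrices `a_{n,m}`. -/
noncomputable def kerK {N : ℕ} (a : ℕ → ℕ → Matrix (Fin N) (Fin N) ℍ[ℝ])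
    (p q : ℍ[ℝ]) : Matrix (Fin N) (Fin N) ℍ[ℝ] :=
  fun i j => ∑' nm : ℕ × ℕ, p ^ nm.1 * a nm.1 nm.2 i j * (star q) ^ nm.2

/-- The Gram block matrix `G(p₁,…,p_k) = (K(p_i,p_j))_{i,j}` of a kernel `K` at a
finite tuple of points. -/
noncomputable def gram {N k : ℕ} (K : ℍ[ℝ] → ℍ[ℝ] → Matrix (Fin N) (Fin N) ℍ[ℝ])
    (p : Fin k → ℍ[ℝ]) : Matrix (Fin k × Fin N) (Fin k × Fin N) ℍ[ℝ] :=
  fun x y => K (p x.1) (p y.1) x.2 y.2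

/-- `K` has `κ` negative squares in the ball `B_r`: all Gram block matrices at tuples
of points of `B_r` have `ν₋ ≤ κ`, with equality for at least one tuple. -/
noncomputable def hasNegSquares {N : ℕ} (a : ℕ → ℕ → Matrix (Fin N) (Fin N) ℍ[ℝ])
    (r : ℝ) (κ : ℕ) : Prop :=
  (∀ (k : ℕ) (p : Fin k → ℍ[ℝ]), (∀ i, ‖p i‖ < r) → negIndex (gram (kerK a) p) ≤ κ) ∧
  (∃ (k : ℕ) (p : Fin k → ℍ[ℝ]), (∀ i, ‖p i‖ < r) ∧ negIndex (gram (kerK a) p) = κ)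

/-- The coefficients `b_{n,m} = Σ_{i=0}^{n} Σ_{j=0}^{m} α_i a_{n−i,m−j} α_j*` of the
kernel `B(p,q) = α(p) ⋆ K(p,q) ⋆_r α(q)*`, where `α(p) = Σ pⁿ αₙ`. -/
noncomputable def bCoef {N : ℕ} (α : ℕ → Matrix (Fin N) (Fin N) ℍ[ℝ])
    (a : ℕ → ℕ → Matrix (Fin N) (Fin N) ℍ[ℝ]) (n m : ℕ) : Matrix (Fin N) (Fin N) ℍ[ℝ] :=
  ∑ i ∈ Finset.range (n + 1), ∑ j ∈ Finset.range (m + 1),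
    α i * a (n - i) (m - j) * (α j)ᴴ

/-! The kernel is governed by its truncated coefficient matrices `A_μ = (a_{n,m})_{n,m<μ}`: it has
`κ` negative squares if and only if `κ = max_μ ν₋(A_μ)`.  Since `ν₋` does not increase under
congruence and is lower semicontinuous, this follows from two limits.  A Gram matrix is a limit of
congruences `P* A_μ P`, by truncating the double series.  Conversely, a divided-difference matrix
`P`, combining values of the kernel at the real points `0, s, …, (μ-1)s`, extracts the
coefficients, so that `P* G P → A_μ` as `s → 0`; real points are central, so that the powers of `s`
can be moved past the quaternionic coefficients.  On coefficient matrices the star product with `α`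
is the congruence `B_μ = T A_μ T*` by the block lower triangular Toeplitz matrix `T` of `α`, which
is invertible because the power series `α` is. -/

section NegIndex

open Filter Topology

/-- The Hermitian form `v ↦ v* H v` is negative definite on the right subspace `W`. -/
def IsNegDefOn {ι : Type*} [Fintype ι] (H : Matrix ι ι ℍ[ℝ])
    (W : Submodule ℍ[ℝ]ᵐᵒᵖ (ι → ℍ[ℝ])) : Prop :=
  ∀ v ∈ W, v ≠ 0 → (star v ⬝ᵥ H *ᵥ v).re < 0

instance finite_quaternion_op_pi {ι : Type*} [Finite ι] :
    Module.Finite ℍ[ℝ]ᵐᵒᵖ (ι → ℍ[ℝ]) :=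
  .of_restrictScalars_finite ℝ _ _

variable {ι κ : Type*} [Fintype ι] [Fintype κ]

theorem bddAbove_finrank_isNegDefOn (H : Matrix ι ι ℍ[ℝ]) :
    BddAbove {d : ℕ | ∃ W : Submodule ℍ[ℝ]ᵐᵒᵖ (ι → ℍ[ℝ]),
      Module.finrank ℍ[ℝ]ᵐᵒᵖ W = d ∧ IsNegDefOn H W} := by
  refine ⟨Module.finrank ℍ[ℝ]ᵐᵒᵖ (ι → ℍ[ℝ]), ?_⟩
  rintro _ ⟨W, rfl, -⟩
  exact W.finrank_le

theorem IsNegDefOn.finrank_le_negIndex {H : Matrix ι ι ℍ[ℝ]}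
    {W : Submodule ℍ[ℝ]ᵐᵒᵖ (ι → ℍ[ℝ])} (hW : IsNegDefOn H W) :
    Module.finrank ℍ[ℝ]ᵐᵒᵖ W ≤ negIndex H :=
  le_csSup (bddAbove_finrank_isNegDefOn H) ⟨W, rfl, hW⟩

theorem exists_isNegDefOn_finrank_eq_negIndex (H : Matrix ι ι ℍ[ℝ]) :
    ∃ W : Submodule ℍ[ℝ]ᵐᵒᵖ (ι → ℍ[ℝ]),
      Module.finrank ℍ[ℝ]ᵐᵒᵖ W = negIndex H ∧ IsNegDefOn H W := by
  refine Nat.sSup_mem ?_ (bddAbove_finrank_isNegDefOn H)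
  exact ⟨0, ⊥, finrank_bot _ _, fun v hv hv0 => absurd ((Submodule.mem_bot _).1 hv) hv0⟩

theorem star_dotProduct_conj_mulVec (H : Matrix κ κ ℍ[ℝ]) (P : Matrix κ ι ℍ[ℝ]) (v : ι → ℍ[ℝ]) :
    star v ⬝ᵥ (Pᴴ * H * P) *ᵥ v = star (P *ᵥ v) ⬝ᵥ H *ᵥ (P *ᵥ v) := by
  rw [star_mulVec, ← mulVec_mulVec, ← mulVec_mulVec, dotProduct_mulVec]

/-- The form of `P* H P` vanishes on the kernel of `P`, so `P` is injective on every subspace on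
which that form is negative definite. -/
theorem negIndex_conjTranspose_mul_mul_le (H : Matrix κ κ ℍ[ℝ]) (P : Matrix κ ι ℍ[ℝ]) :
    negIndex (Pᴴ * H * P) ≤ negIndex H := by
  obtain ⟨W, hrank, hW⟩ := exists_isNegDefOn_finrank_eq_negIndex (Pᴴ * H * P)
  let f := mulVecBilin ℕ ℍ[ℝ]ᵐᵒᵖ P
  have form_lt (v) (hv : v ∈ W) (hv0 : v ≠ 0) : (star (f v) ⬝ᵥ H *ᵥ f v).re < 0 :=
    star_dotProduct_conj_mulVec H P v ▸ hW v hv hv0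
  have hinj : Function.Injective (f.domRestrict W) := by
    rw [injective_iff_map_eq_zero]
    rintro ⟨v, hv⟩ (hfv : f v = 0)
    by_contra hv0
    simpa [hfv] using form_lt v hv fun h => hv0 (Subtype.ext h)
  have hneg : IsNegDefOn H (W.map f) := by
    rintro _ ⟨v, hv, rfl⟩ hfv
    exact form_lt v hv fun h => hfv (by rw [h, map_zero])
  calc negIndex (Pᴴ * H * P) = Module.finrank ℍ[ℝ]ᵐᵒᵖ (W.map f) := by
        rw [← hrank, ← LinearMap.range_domRestrict, LinearMap.finrank_range_of_inj hinj]
    _ ≤ negIndex H := hneg.finrank_le_negIndex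

theorem negIndex_mul_mul_conjTranspose [DecidableEq ι] {L L' : Matrix ι ι ℍ[ℝ]} (hL : L' * L = 1)
    (H : Matrix ι ι ℍ[ℝ]) : negIndex (L * H * Lᴴ) = negIndex H := by
  refine le_antisymm (by simpa using negIndex_conjTranspose_mul_mul_le H Lᴴ) ?_
  have hH : H = L' * (L * H * Lᴴ) * L'ᴴ :=
    calc H = L' * L * H * (L' * L)ᴴ := by simp [hL]
      _ = L' * (L * H * Lᴴ) * L'ᴴ := by simp only [conjTranspose_mul, Matrix.mul_assoc]
  conv_lhs => rw [hH]
  simpa using negIndex_conjTranspose_mul_mul_le (L * H * Lᴴ) L'ᴴ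

theorem re_star_smul_dotProduct_mulVec_smul (H : Matrix ι ι ℍ[ℝ]) (r : ℝ) (v : ι → ℍ[ℝ]) :
    (star (r • v) ⬝ᵥ H *ᵥ (r • v)).re = r ^ 2 * (star v ⬝ᵥ H *ᵥ v).re := by
  have hstar : star (r • v) = r • star v := funext fun i => by simp
  rw [hstar, mulVec_smul, smul_dotProduct, dotProduct_smul, smul_smul, re_smul, sq, smul_eq_mul]

/-- By homogeneity negativity is tested on the unit sphere of `W`, which is compact. -/
theorem IsNegDefOn.eventually {H : Matrix ι ι ℍ[ℝ]} {W : Submodule ℍ[ℝ]ᵐᵒᵖ (ι → ℍ[ℝ])}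
    (hW : IsNegDefOn H W) : ∀ᶠ H' in 𝓝 H, IsNegDefOn H' W := by
  have hclosed : IsClosed (W : Set (ι → ℍ[ℝ])) :=
    (W.restrictScalars ℝ).closed_of_finiteDimensional
  have hcompact : IsCompact (Metric.sphere (0 : ι → ℍ[ℝ]) 1 ∩ W) :=
    (isCompact_sphere _ _).inter_right hclosed
  have hcont : Continuous fun z : Matrix ι ι ℍ[ℝ] × (ι → ℍ[ℝ]) => (star z.2 ⬝ᵥ z.1 *ᵥ z.2).re :=
    Quaternion.continuous_re.comp (by fun_prop)
  have hsphere : ∀ᶠ H' in 𝓝 H, ∀ v ∈ Metric.sphere (0 : ι → ℍ[ℝ]) 1 ∩ W,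
      (star v ⬝ᵥ H' *ᵥ v).re < 0 := by
    refine hcompact.eventually_forall_of_forall_eventually fun v ⟨hv, hvW⟩ => ?_
    exact hcont.continuousAt.eventually_lt_const (hW v hvW (ne_zero_of_mem_unit_sphere ⟨v, hv⟩))
  filter_upwards [hsphere] with H' hH' v hv hv0
  have hnorm : 0 < ‖v‖ := norm_pos_iff.2 hv0
  have hunit := hH' (‖v‖⁻¹ • v)
    ⟨by simp [norm_smul, hnorm.ne'], (W.restrictScalars ℝ).smul_mem _ hv⟩
  rw [re_star_smul_dotProduct_mulVec_smul] at hunit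
  exact (pos_iff_neg_of_mul_neg hunit).1 (by positivity)

theorem eventually_negIndex_le (H : Matrix ι ι ℍ[ℝ]) : ∀ᶠ H' in 𝓝 H, negIndex H ≤ negIndex H' := by
  obtain ⟨W, hrank, hW⟩ := exists_isNegDefOn_finrank_eq_negIndex H
  filter_upwards [hW.eventually] with H' hH'
  exact hrank ▸ hH'.finrank_le_negIndex

theorem eventually_negIndex_le_of_tendsto_conj {β : Type*} {l : Filter β} {κ : β → Type*}
    [∀ b, Fintype (κ b)] {H : ∀ b, Matrix (κ b) (κ b) ℍ[ℝ]} {P : ∀ b, Matrix (κ b) ι ℍ[ℝ]}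
    {G : Matrix ι ι ℍ[ℝ]} (h : Tendsto (fun b => (P b)ᴴ * H b * P b) l (𝓝 G)) :
    ∀ᶠ b in l, negIndex G ≤ negIndex (H b) :=
  (h.eventually (eventually_negIndex_le G)).mono fun b hb =>
    hb.trans (negIndex_conjTranspose_mul_mul_le (H b) (P b))

end NegIndex

section Toeplitz

variable {R : Type*} [Semiring R]

/-- The matrix of left multiplication by `φ` on power series modulo `X ^ μ`: the lower triangular
Toeplitz matrix whose `(n, i)` entry, for `i ≤ n`, is the coefficient of `φ` of index `n - i`. -/
noncomputable def lowerToeplitz (φ : PowerSeries R) (μ : ℕ) : Matrix (Fin μ) (Fin μ) R :=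
  of fun n i => PowerSeries.coeff n (φ * PowerSeries.X ^ (i : ℕ))

theorem sum_lowerToeplitz_mul (φ : PowerSeries R) {μ : ℕ} (n : Fin μ) (f : ℕ → R) :
    ∑ i, lowerToeplitz φ μ n i * f i =
      ∑ i ∈ Finset.range (n + 1), PowerSeries.coeff i φ * f (n - i) := by
  have hsub : Finset.range (n + 1) ⊆ Finset.range μ := Finset.range_subset_range.2 n.2
  calc ∑ i, lowerToeplitz φ μ n i * f i
      = ∑ i ∈ Finset.range μ, if i ≤ n then PowerSeries.coeff (n - i) φ * f i else 0 := by
        simp only [lowerToeplitz, of_apply, PowerSeries.coeff_mul_X_pow', ite_mul, zero_mul,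
          Fin.sum_univ_eq_sum_range
            (fun i => if i ≤ n then PowerSeries.coeff (n - i) φ * f i else 0)]
    _ = ∑ i ∈ Finset.range (n + 1), PowerSeries.coeff (n - i) φ * f i := by
        rw [← Finset.sum_subset hsub fun i _ hi => if_neg (by simpa using hi)]
        exact Finset.sum_congr rfl fun i hi => if_pos (Finset.mem_range_succ_iff.1 hi)
    _ = ∑ i ∈ Finset.range (n + 1), PowerSeries.coeff i φ * f (n - i) := by
        rw [← Finset.Nat.sum_antidiagonal_eq_sum_range_succ
            (fun i j => PowerSeries.coeff i φ * f j),
          ← Finset.Nat.sum_antidiagonal_swap]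
        exact (Finset.Nat.sum_antidiagonal_eq_sum_range_succ
          (fun i j => PowerSeries.coeff j φ * f i) n).symm

theorem lowerToeplitz_mul (φ ψ : PowerSeries R) (μ : ℕ) :
    lowerToeplitz (φ * ψ) μ = lowerToeplitz φ μ * lowerToeplitz ψ μ := by
  ext n j
  symm
  calc ∑ i, lowerToeplitz φ μ n i * lowerToeplitz ψ μ i j
      = ∑ i ∈ Finset.range (n + 1), PowerSeries.coeff i φ *
          PowerSeries.coeff (n - i) (ψ * PowerSeries.X ^ (j : ℕ)) :=
        sum_lowerToeplitz_mul φ n fun i => PowerSeries.coeff i (ψ * PowerSeries.X ^ (j : ℕ))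
    _ = lowerToeplitz (φ * ψ) μ n j := by
        rw [lowerToeplitz, of_apply, mul_assoc, PowerSeries.coeff_mul,
          Finset.Nat.sum_antidiagonal_eq_sum_range_succ_mk]

theorem lowerToeplitz_one (μ : ℕ) : lowerToeplitz (1 : PowerSeries R) μ = 1 := by
  ext n i
  simp [lowerToeplitz, PowerSeries.coeff_X_pow, one_apply, Fin.ext_iff]

theorem lowerToeplitz_mul_mul_conjTranspose_apply [StarRing R] (φ : PowerSeries R) (a : ℕ → ℕ → R)
    {μ : ℕ} (n m : Fin μ) :
    (lowerToeplitz φ μ * of (fun i j : Fin μ => a i j) * (lowerToeplitz φ μ)ᴴ) n m =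
      ∑ i ∈ Finset.range (n + 1), ∑ j ∈ Finset.range (m + 1),
        PowerSeries.coeff i φ * a (n - i) (m - j) * star (PowerSeries.coeff j φ) := by
  have hright (f : ℕ → R) : ∑ j : Fin μ, f j * star (lowerToeplitz φ μ m j) =
      ∑ j ∈ Finset.range (m + 1), f (m - j) * star (PowerSeries.coeff j φ) := by
    simpa using congrArg star (sum_lowerToeplitz_mul φ m fun j => star (f j))
  calc (lowerToeplitz φ μ * of (fun i j : Fin μ => a i j) * (lowerToeplitz φ μ)ᴴ) n m
      = ∑ j : Fin μ, (∑ i ∈ Finset.range (n + 1), PowerSeries.coeff i φ * a (n - i) j) *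
          star (lowerToeplitz φ μ m j) := by
        rw [mul_apply]
        refine Finset.sum_congr rfl fun j _ => ?_
        rw [mul_apply, conjTranspose_apply]
        exact congrArg (· * _) (sum_lowerToeplitz_mul φ n fun i => a i j)
    _ = _ := by
        rw [hright fun j => ∑ i ∈ Finset.range (n + 1), PowerSeries.coeff i φ * a (n - i) j,
          Finset.sum_comm]
        simp only [Finset.sum_mul]

end Toeplitz

section CoefficientMatrix

variable {N : ℕ}

/-- The truncated coefficient matrix `A_μ = (a_{n,m})_{n,m<μ}`, with `N × N` blocks. -/
def coeffMatrix (a : ℕ → ℕ → Matrix (Fin N) (Fin N) ℍ[ℝ]) (μ : ℕ) :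
    Matrix (Fin μ × Fin N) (Fin μ × Fin N) ℍ[ℝ] :=
  comp _ _ _ _ _ (of fun n m : Fin μ => a n m)

theorem coeffMatrix_bCoef (α : ℕ → Matrix (Fin N) (Fin N) ℍ[ℝ])
    (a : ℕ → ℕ → Matrix (Fin N) (Fin N) ℍ[ℝ]) (μ : ℕ) :
    coeffMatrix (bCoef α a) μ =
      comp _ _ _ _ _ (lowerToeplitz (PowerSeries.mk α) μ) * coeffMatrix a μ *
        (comp _ _ _ _ _ (lowerToeplitz (PowerSeries.mk α) μ))ᴴ := by
  set T := lowerToeplitz (PowerSeries.mk α) μ with hT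
  have hblocks :
      (of fun n m : Fin μ => bCoef α a n m) = T * (of fun n m : Fin μ => a n m) * Tᴴ := by
    ext1 n m
    rw [hT, lowerToeplitz_mul_mul_conjTranspose_apply]
    simp only [of_apply, bCoef, PowerSeries.coeff_mk, star_eq_conjTranspose]
  rw [coeffMatrix, hblocks, ← compRingEquiv_apply, map_mul, map_mul]
  rfl

theorem negIndex_coeffMatrix_bCoef {α : ℕ → Matrix (Fin N) (Fin N) ℍ[ℝ]} (hα0 : IsUnit (α 0))
    (a : ℕ → ℕ → Matrix (Fin N) (Fin N) ℍ[ℝ]) (μ : ℕ) :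
    negIndex (coeffMatrix (bCoef α a) μ) = negIndex (coeffMatrix a μ) := by
  obtain ⟨u, hu⟩ := hα0
  let φ := PowerSeries.mk α
  have hφ : PowerSeries.invOfUnit φ u * φ = 1 := PowerSeries.invOfUnit_mul φ u (by simp [φ, hu])
  rw [coeffMatrix_bCoef]
  refine negIndex_mul_mul_conjTranspose
    (L' := comp _ _ _ _ _ (lowerToeplitz (PowerSeries.invOfUnit φ u) μ)) ?_ _
  rw [← compRingEquiv_apply, ← compRingEquiv_apply, ← map_mul, ← lowerToeplitz_mul, hφ,
    lowerToeplitz_one, map_one]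

end CoefficientMatrix

section CoefficientExtraction

open Filter Topology Polynomial

/-- The polynomial of degree less than `μ` that agrees with `X ^ m` at the nodes
`0, 1, …, μ - 1`. -/
noncomputable def monomialInterpolant (μ m : ℕ) : ℝ[X] :=
  Lagrange.interpolate Finset.univ (fun l : Fin μ => (l : ℝ)) fun l => (l : ℝ) ^ m

theorem monomialInterpolant_of_lt {μ m : ℕ} (h : m < μ) : monomialInterpolant μ m = X ^ m := by
  refine (Lagrange.eq_interpolate_of_eval_eq _ (fun l _ l' _ hl => ?_) ?_ fun l _ => ?_).symm
  · exact Fin.ext (Nat.cast_injective hl)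
  · simpa [degree_X_pow] using h
  · simp

/-- Divided-difference weights: for small `s ≠ 0`, the sum over `l` of `f (s * l)` with the weights
in column `j` approximates the coefficient of index `j` of the power series `f`. -/
noncomputable def extractionWeight (μ : ℕ) (s : ℝ) : Matrix (Fin μ) (Fin μ) ℝ :=
  of fun l j => (s ^ (j : ℕ))⁻¹ * (Lagrange.basis Finset.univ (fun l : Fin μ => (l : ℝ)) l).coeff j

theorem sum_extractionWeight_mul_pow {μ : ℕ} {s : ℝ} (hs : s ≠ 0) (j : Fin μ) (m : ℕ) :
    ∑ l, extractionWeight μ s l j * (s * (l : ℕ)) ^ m =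
      s ^ (m - j : ℕ) * (monomialInterpolant μ m).coeff j := by
  have hscale : ∑ l, extractionWeight μ s l j * (s * (l : ℕ)) ^ m =
      s ^ m * (s ^ (j : ℕ))⁻¹ * (monomialInterpolant μ m).coeff j := by
    simp only [monomialInterpolant, Lagrange.interpolate_apply, finsetSum_coeff, coeff_C_mul,
      extractionWeight, of_apply, Finset.mul_sum]
    exact Finset.sum_congr rfl fun l _ => by ring
  rw [hscale]
  obtain hjm | hmj := le_or_gt (j : ℕ) m
  · rw [pow_sub₀ s hs hjm]
  · simp [monomialInterpolant_of_lt (hmj.trans j.2), coeff_X_pow, hmj.ne']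

theorem tendsto_pow_sub_mul_coeff_monomialInterpolant {μ : ℕ} (j : Fin μ) (m : ℕ) :
    Tendsto (fun s : ℝ => s ^ (m - j : ℕ) * (monomialInterpolant μ m).coeff j) (𝓝 0)
      (𝓝 (if m = j then 1 else 0)) := by
  have hcont : Continuous fun s : ℝ => s ^ (m - j : ℕ) * (monomialInterpolant μ m).coeff j := by
    fun_prop
  convert hcont.tendsto 0 using 2
  obtain hm | hm := lt_or_ge m μ
  · obtain rfl | hmj := eq_or_ne m j
    · simp [monomialInterpolant_of_lt hm]
    · simp [monomialInterpolant_of_lt hm, coeff_X_pow, hmj, hmj.symm]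
  · rw [if_neg (by lia), zero_pow (by lia), zero_mul]

end CoefficientExtraction

section Gram

open Filter Topology
open scoped Kronecker

theorem conj_kronecker_one_apply {R κ ι ν : Type*} [Semiring R] [StarRing R] [Fintype κ]
    [Fintype ν] [DecidableEq ν] (P : Matrix κ ι R) (M : Matrix (κ × ν) (κ × ν) R)
    (i j : ι) (x y : ν) :
    ((P ⊗ₖ (1 : Matrix ν ν R))ᴴ * M * (P ⊗ₖ (1 : Matrix ν ν R))) (i, x) (j, y) =
      ∑ l', (∑ l, star (P l i) * M (l, x) (l', y)) * P l' j := by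
  simp [mul_apply, Fintype.sum_prod_type, one_apply, apply_ite star]

variable {N : ℕ} {a : ℕ → ℕ → Matrix (Fin N) (Fin N) ℍ[ℝ]} {ρ : ℝ}

theorem summable_kerK_apply
    (hsum : Summable fun nm : ℕ × ℕ => ‖a nm.1 nm.2‖ * ρ ^ (nm.1 + nm.2))
    {p q : ℍ[ℝ]} (hp : ‖p‖ ≤ ρ) (hq : ‖q‖ ≤ ρ) (x y : Fin N) :
    Summable fun nm : ℕ × ℕ => p ^ nm.1 * a nm.1 nm.2 x y * star q ^ nm.2 := by
  refine .of_norm_bounded hsum fun nm => ?_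
  calc ‖p ^ nm.1 * a nm.1 nm.2 x y * star q ^ nm.2‖
      = ‖a nm.1 nm.2 x y‖ * (‖p‖ ^ nm.1 * ‖q‖ ^ nm.2) := by
        simp only [norm_mul, norm_pow, norm_star]; ring
    _ ≤ ‖a nm.1 nm.2‖ * (ρ ^ nm.1 * ρ ^ nm.2) := by
        have hρ : 0 ≤ ρ := (norm_nonneg p).trans hp
        gcongr
        exact norm_entry_le_entrywise_sup_norm _
    _ = ‖a nm.1 nm.2‖ * ρ ^ (nm.1 + nm.2) := by rw [pow_add]

theorem hasSum_gram_kerK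
    (hsum : Summable fun nm : ℕ × ℕ => ‖a nm.1 nm.2‖ * ρ ^ (nm.1 + nm.2))
    {k : ℕ} {p : Fin k → ℍ[ℝ]} (hp : ∀ i, ‖p i‖ ≤ ρ) (i j : Fin k) (x y : Fin N) :
    HasSum (fun nm : ℕ × ℕ => p i ^ nm.1 * a nm.1 nm.2 x y * star (p j) ^ nm.2)
      (_root_.gram (kerK a) p (i, x) (j, y)) :=
  (summable_kerK_apply hsum (hp i) (hp j) x y).hasSum

theorem tendsto_conj_coeffMatrix
    (hsum : Summable fun nm : ℕ × ℕ => ‖a nm.1 nm.2‖ * ρ ^ (nm.1 + nm.2))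
    {k : ℕ} {p : Fin k → ℍ[ℝ]} (hp : ∀ i, ‖p i‖ ≤ ρ) :
    Tendsto (fun μ =>
        let P : Matrix (Fin μ) (Fin k) ℍ[ℝ] := of fun n j => star (p j) ^ (n : ℕ)
        (P ⊗ₖ (1 : Matrix (Fin N) (Fin N) ℍ[ℝ]))ᴴ * coeffMatrix a μ *
          (P ⊗ₖ (1 : Matrix (Fin N) (Fin N) ℍ[ℝ])))
      atTop (𝓝 (_root_.gram (kerK a) p)) := by
  have hsquares : Tendsto (fun μ => Finset.range μ ×ˢ Finset.range μ) atTop atTop :=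
    tendsto_atTop_finset_of_monotone
      (fun μ μ' h => Finset.product_subset_product (Finset.range_mono h) (Finset.range_mono h))
      fun nm => ⟨max nm.1 nm.2 + 1, by simp⟩
  refine tendsto_pi_nhds.2 fun ⟨i, x⟩ => tendsto_pi_nhds.2 fun ⟨j, y⟩ => ?_
  refine ((hasSum_gram_kerK hsum hp i j x y).comp hsquares).congr fun μ => ?_
  rw [conj_kronecker_one_apply, Function.comp_apply, Finset.sum_product_right]
  simp only [Finset.sum_range, of_apply, star_pow, star_star, Finset.sum_mul]
  rfl

theorem exists_negIndex_gram_le_negIndex_coeffMatrix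
    (hsum : Summable fun nm : ℕ × ℕ => ‖a nm.1 nm.2‖ * ρ ^ (nm.1 + nm.2))
    {k : ℕ} {p : Fin k → ℍ[ℝ]} (hp : ∀ i, ‖p i‖ ≤ ρ) :
    ∃ μ, negIndex (_root_.gram (kerK a) p) ≤ negIndex (coeffMatrix a μ) :=
  (eventually_negIndex_le_of_tendsto_conj (tendsto_conj_coeffMatrix hsum hp)).exists

theorem hasSum_conj_gram_ofReal
    (hsum : Summable fun nm : ℕ × ℕ => ‖a nm.1 nm.2‖ * ρ ^ (nm.1 + nm.2))
    {k : ℕ} {ι : Type*} {t : Fin k → ℝ} (ht : ∀ l, |t l| ≤ ρ) (P : Matrix (Fin k) ι ℝ)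
    (i j : ι) (x y : Fin N) :
    let Q' := P.map ((↑) : ℝ → ℍ[ℝ])
    let Q := Q' ⊗ₖ (1 : Matrix (Fin N) (Fin N) ℍ[ℝ])
    HasSum (fun nm : ℕ × ℕ =>
        ((∑ l, P l i * t l ^ nm.1) * ∑ l, P l j * t l ^ nm.2) • a nm.1 nm.2 x y)
      ((Qᴴ * _root_.gram (kerK a) (fun l => (t l : ℍ[ℝ])) * Q) (i, x) (j, y)) := by
  intro Q' Q
  have hgram (l l') := hasSum_gram_kerK hsum (p := fun l => (t l : ℍ[ℝ]))
    (fun l => by simpa using ht l) l l' x y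
  rw [conj_kronecker_one_apply]
  refine (hasSum_sum fun l' (_ : l' ∈ Finset.univ) =>
    (hasSum_sum fun l (_ : l ∈ Finset.univ) =>
      (hgram l l').mul_left (star (Q' l i))).mul_right (Q' l' j)).congr_fun fun nm => ?_
  symm
  calc ∑ l', (∑ l, star (Q' l i) * ((t l : ℍ[ℝ]) ^ nm.1 * a nm.1 nm.2 x y *
        star (t l' : ℍ[ℝ]) ^ nm.2)) * Q' l' j
      = ∑ l', (∑ l, (P l i * t l ^ nm.1 * (P l' j * t l' ^ nm.2)) • a nm.1 nm.2 x y) := by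
        refine Finset.sum_congr rfl fun l' _ => ?_
        rw [Finset.sum_mul]
        refine Finset.sum_congr rfl fun l _ => ?_
        simp only [Q', map_apply, star_coe, ← coe_pow, coe_mul_eq_smul, mul_coe_eq_smul, smul_smul]
        congr 1
        ring
    _ = ((∑ l, P l i * t l ^ nm.1) * ∑ l, P l j * t l ^ nm.2) • a nm.1 nm.2 x y := by
        simp only [← Finset.sum_smul, Finset.sum_mul_sum]
        rw [Finset.sum_comm]

theorem hasSum_conj_gram_extractionWeight
    (hsum : Summable fun nm : ℕ × ℕ => ‖a nm.1 nm.2‖ * ρ ^ (nm.1 + nm.2))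
    {μ : ℕ} {s : ℝ} (hs : 0 < s) (hsμ : s * μ ≤ ρ) (i j : Fin μ) (x y : Fin N) :
    let Q := (extractionWeight μ s).map ((↑) : ℝ → ℍ[ℝ]) ⊗ₖ (1 : Matrix (Fin N) (Fin N) ℍ[ℝ])
    HasSum (fun nm : ℕ × ℕ =>
        (s ^ (nm.1 - i : ℕ) * (monomialInterpolant μ nm.1).coeff i *
          (s ^ (nm.2 - j : ℕ) * (monomialInterpolant μ nm.2).coeff j)) • a nm.1 nm.2 x y)
      ((Qᴴ * _root_.gram (kerK a) (fun l : Fin μ => ((s * (l : ℕ) : ℝ) : ℍ[ℝ])) * Q)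
        (i, x) (j, y)) := by
  have hnodes (l : Fin μ) : |s * (l : ℕ)| ≤ ρ := by
    rw [abs_of_nonneg (by positivity)]
    refine le_trans ?_ hsμ
    gcongr
    exact l.2.le
  simpa only [sum_extractionWeight_mul_pow hs.ne'] using
    hasSum_conj_gram_ofReal hsum hnodes (extractionWeight μ s) i j x y

theorem eventually_pos_and_mul_le (hρ : 0 < ρ) (r : ℝ) :
    ∀ᶠ s in 𝓝[>] (0 : ℝ), 0 < s ∧ s * r ≤ ρ := by
  have hlim : Tendsto (fun s : ℝ => s * r) (𝓝 0) (𝓝 0) := by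
    simpa using (continuous_mul_const r).tendsto 0
  exact eventually_mem_nhdsWithin.and ((hlim.mono_left nhdsWithin_le_nhds).eventually_le_const hρ)

theorem tendsto_conj_gram
    (hsum : Summable fun nm : ℕ × ℕ => ‖a nm.1 nm.2‖ * ρ ^ (nm.1 + nm.2)) (hρ : 0 < ρ) (μ : ℕ) :
    Tendsto (fun s : ℝ =>
        let Q := (extractionWeight μ s).map ((↑) : ℝ → ℍ[ℝ]) ⊗ₖ (1 : Matrix (Fin N) (Fin N) ℍ[ℝ])
        Qᴴ * _root_.gram (kerK a) (fun l : Fin μ => ((s * (l : ℕ) : ℝ) : ℍ[ℝ])) * Q)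
      (𝓝[>] 0) (𝓝 (coeffMatrix a μ)) := by
  have hsmall := eventually_pos_and_mul_le hρ μ
  obtain ⟨s₀, hs₀, hs₀μ⟩ := hsmall.exists
  refine tendsto_pi_nhds.2 fun ⟨i, x⟩ => tendsto_pi_nhds.2 fun ⟨j, y⟩ => ?_
  have hlimit : ∑' nm : ℕ × ℕ, ((if nm.1 = i then 1 else 0) * (if nm.2 = j then 1 else 0) : ℝ) •
      a nm.1 nm.2 x y = coeffMatrix a μ (i, x) (j, y) := by
    rw [tsum_eq_single ((i : ℕ), (j : ℕ))]
    · simp [coeffMatrix]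
    · intro nm hnm
      rw [ite_zero_mul_ite_zero, if_neg (mt Prod.ext_iff.2 hnm), zero_smul]
  rw [← hlimit]
  refine Tendsto.congr' (hsmall.mono fun s hs =>
    (hasSum_conj_gram_extractionWeight hsum hs.1 hs.2 i j x y).tsum_eq) ?_
  refine tendsto_tsum_of_dominated_convergence
    (hasSum_conj_gram_extractionWeight hsum hs₀ hs₀μ i j x y).summable.norm (fun nm => ?_) ?_
  · have hcoeff (i : Fin μ) (n : ℕ) :=
      (tendsto_pow_sub_mul_coeff_monomialInterpolant i n).mono_left
        (nhdsWithin_le_nhds (s := Set.Ioi 0))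
    exact ((hcoeff i nm.1).mul (hcoeff j nm.2)).smul_const _
  · filter_upwards [Ioc_mem_nhdsGT hs₀] with s ⟨hs, hss₀⟩ nm
    simp only [norm_smul, norm_mul, norm_pow, Real.norm_of_nonneg hs.le,
      Real.norm_of_nonneg hs₀.le]
    gcongr

theorem exists_negIndex_coeffMatrix_le_negIndex_gram
    (hsum : Summable fun nm : ℕ × ℕ => ‖a nm.1 nm.2‖ * ρ ^ (nm.1 + nm.2)) (hρ : 0 < ρ) (μ : ℕ) :
    ∃ p : Fin μ → ℍ[ℝ], (∀ i, ‖p i‖ < ρ) ∧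
      negIndex (coeffMatrix a μ) ≤ negIndex (_root_.gram (kerK a) p) := by
  obtain ⟨s, ⟨hs, hsμ⟩, hle⟩ := ((eventually_pos_and_mul_le hρ μ).and
    (eventually_negIndex_le_of_tendsto_conj (tendsto_conj_gram hsum hρ μ))).exists
  refine ⟨_, fun l => ?_, hle⟩
  rw [norm_coe, Real.norm_of_nonneg (by positivity)]
  exact (mul_lt_mul_of_pos_left (by exact_mod_cast l.2) hs).trans_le hsμ

theorem hasNegSquares_iff_isGreatest
    (hsum : Summable fun nm : ℕ × ℕ => ‖a nm.1 nm.2‖ * ρ ^ (nm.1 + nm.2)) (hρ : 0 < ρ) {κ : ℕ} :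
    hasNegSquares a ρ κ ↔ IsGreatest (Set.range fun μ => negIndex (coeffMatrix a μ)) κ := by
  have hgram_le {k : ℕ} {p : Fin k → ℍ[ℝ]} (hp : ∀ i, ‖p i‖ < ρ) :=
    exists_negIndex_gram_le_negIndex_coeffMatrix hsum fun i => (hp i).le
  have hle_gram := exists_negIndex_coeffMatrix_le_negIndex_gram hsum hρ
  constructor
  · rintro ⟨hle, k, p, hp, rfl⟩
    have hub (μ : ℕ) : negIndex (coeffMatrix a μ) ≤ negIndex (_root_.gram (kerK a) p) := by
      obtain ⟨q, hq, hμ⟩ := hle_gram μ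
      exact hμ.trans (hle μ q hq)
    obtain ⟨μ, hμ⟩ := hgram_le hp
    exact ⟨⟨μ, (hub μ).antisymm hμ⟩, Set.forall_mem_range.2 hub⟩
  · rintro ⟨⟨μ, rfl⟩, hub⟩
    have hle (k : ℕ) (p : Fin k → ℍ[ℝ]) (hp : ∀ i, ‖p i‖ < ρ) :
        negIndex (_root_.gram (kerK a) p) ≤ negIndex (coeffMatrix a μ) := by
      obtain ⟨ν, hν⟩ := hgram_le hp
      exact hν.trans (hub ⟨ν, rfl⟩)
    obtain ⟨p, hp, hμ⟩ := hle_gram μ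
    exact ⟨hle, μ, p, hp, (hle μ p hp).antisymm hμ⟩

theorem hasNegSquares_bCoef_iff {α : ℕ → Matrix (Fin N) (Fin N) ℍ[ℝ]} (hα0 : IsUnit (α 0))
    (hsum : Summable fun nm : ℕ × ℕ => ‖a nm.1 nm.2‖ * ρ ^ (nm.1 + nm.2))
    (hbsum : Summable fun nm : ℕ × ℕ => ‖bCoef α a nm.1 nm.2‖ * ρ ^ (nm.1 + nm.2))
    (hρ : 0 < ρ) {κ : ℕ} : hasNegSquares (bCoef α a) ρ κ ↔ hasNegSquares a ρ κ := by
  simp only [hasNegSquares_iff_isGreatest hsum hρ, hasNegSquares_iff_isGreatest hbsum hρ,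
    negIndex_coeffMatrix_bCoef hα0]

end Gram

section Summability

theorem norm_matrix_mul_le {m n l R : Type*} [Fintype m] [Fintype n] [Fintype l]
    [NonUnitalNormedRing R] (A : Matrix m n R) (B : Matrix n l R) :
    ‖A * B‖ ≤ Fintype.card n * (‖A‖ * ‖B‖) := by
  refine (norm_le_iff (by positivity)).2 fun i j => ?_
  calc ‖(A * B) i j‖ ≤ ∑ k, ‖A i k‖ * ‖B k j‖ :=
        (norm_sum_le _ _).trans (Finset.sum_le_sum fun k _ => norm_mul_le _ _)
    _ ≤ ∑ _k : n, ‖A‖ * ‖B‖ := by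
        gcongr <;> exact norm_entry_le_entrywise_sup_norm _
    _ = Fintype.card n * (‖A‖ * ‖B‖) := by simp

open Finset.HasAntidiagonal in
theorem sum_antidiagonal_nat_prod [Finset.HasAntidiagonal (ℕ × ℕ)] {M : Type*} [AddCommMonoid M]
    (F : (ℕ × ℕ) × (ℕ × ℕ) → M) (n m : ℕ) :
    ∑ kl ∈ antidiagonal (n, m), F kl =
      ∑ i ∈ Finset.range (n + 1), ∑ j ∈ Finset.range (m + 1), F ((i, j), (n - i, m - j)) := by
  rw [← Finset.sum_product']
  refine Finset.sum_nbij' (fun kl => kl.1) (fun ij => (ij, (n - ij.1, m - ij.2))) ?_ ?_ ?_ ?_ ?_ <;>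
    simp only [Prod.forall, mem_antidiagonal, Finset.mem_product, Finset.mem_range, Prod.mk_add_mk,
      Prod.mk.injEq]
  case refine_5 =>
    rintro i j k l ⟨rfl, rfl⟩
    simp
  all_goals lia

theorem summable_sum_range_mul_of_nonneg {f g : ℕ × ℕ → ℝ} (hf : Summable f) (hg : Summable g)
    (hf0 : 0 ≤ f) (hg0 : 0 ≤ g) :
    Summable fun nm : ℕ × ℕ => ∑ i ∈ Finset.range (nm.1 + 1), ∑ j ∈ Finset.range (nm.2 + 1),
      f (i, j) * g (nm.1 - i, nm.2 - j) := by
  let := Finset.HasAntidiagonal.antidiagonalOfLocallyFinite (A := ℕ × ℕ)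
  exact (summable_sum_mul_antidiagonal_of_summable_mul (hf.mul_of_nonneg hg hf0 hg0)).congr
    fun nm => sum_antidiagonal_nat_prod (fun kl => f kl.1 * g kl.2) nm.1 nm.2

theorem norm_bCoef_le {N : ℕ} (α : ℕ → Matrix (Fin N) (Fin N) ℍ[ℝ])
    (a : ℕ → ℕ → Matrix (Fin N) (Fin N) ℍ[ℝ]) (n m : ℕ) :
    ‖bCoef α a n m‖ ≤ N * N * ∑ i ∈ Finset.range (n + 1), ∑ j ∈ Finset.range (m + 1),
      ‖α i‖ * ‖α j‖ * ‖a (n - i) (m - j)‖ := by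
  simp only [Finset.mul_sum]
  refine norm_sum_le_of_le _ fun i _ => norm_sum_le_of_le _ fun j _ => ?_
  calc ‖α i * a (n - i) (m - j) * (α j)ᴴ‖
      ≤ N * (‖α i * a (n - i) (m - j)‖ * ‖(α j)ᴴ‖) := by
        simpa using norm_matrix_mul_le (α i * a (n - i) (m - j)) (α j)ᴴ
    _ ≤ N * (N * (‖α i‖ * ‖a (n - i) (m - j)‖) * ‖α j‖) := by
        rw [norm_conjTranspose]
        gcongr
        simpa using norm_matrix_mul_le (α i) (a (n - i) (m - j))
    _ = N * N * (‖α i‖ * ‖α j‖ * ‖a (n - i) (m - j)‖) := by ring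

theorem summable_norm_bCoef {N : ℕ} {a : ℕ → ℕ → Matrix (Fin N) (Fin N) ℍ[ℝ]}
    {α : ℕ → Matrix (Fin N) (Fin N) ℍ[ℝ]} {ρ : ℝ} (hρ : 0 ≤ ρ)
    (hsum : Summable fun nm : ℕ × ℕ => ‖a nm.1 nm.2‖ * ρ ^ (nm.1 + nm.2))
    (hα : Summable fun n : ℕ => ‖α n‖ * ρ ^ n) :
    Summable fun nm : ℕ × ℕ => ‖bCoef α a nm.1 nm.2‖ * ρ ^ (nm.1 + nm.2) := by
  have hα0 : 0 ≤ fun n : ℕ => ‖α n‖ * ρ ^ n := fun n => by positivity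
  have hconv := summable_sum_range_mul_of_nonneg (hα.mul_of_nonneg hα hα0 hα0) hsum
    (fun ij => by positivity) (fun nm => by positivity)
  refine .of_nonneg_of_le (fun nm => by positivity) (fun ⟨n, m⟩ => ?_) (hconv.mul_left (N * N : ℝ))
  calc ‖bCoef α a n m‖ * ρ ^ (n + m)
      ≤ N * N * (∑ i ∈ Finset.range (n + 1), ∑ j ∈ Finset.range (m + 1),
          ‖α i‖ * ‖α j‖ * ‖a (n - i) (m - j)‖) * ρ ^ (n + m) := by
        gcongr
        exact norm_bCoef_le α a n m
    _ = N * N * ∑ i ∈ Finset.range (n + 1), ∑ j ∈ Finset.range (m + 1),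
          ‖α i‖ * ρ ^ i * (‖α j‖ * ρ ^ j) * (‖a (n - i) (m - j)‖ * ρ ^ (n - i + (m - j))) := by
        rw [mul_assoc, Finset.sum_mul]
        congr 1
        refine Finset.sum_congr rfl fun i hi => ?_
        rw [Finset.sum_mul]
        refine Finset.sum_congr rfl fun j hj => ?_
        have hexp : n + m = i + j + (n - i + (m - j)) := by
          simp only [Finset.mem_range] at hi hj
          lia
        rw [hexp, pow_add, pow_add]
        ring

theorem bCoef_conjTranspose {N : ℕ} {a : ℕ → ℕ → Matrix (Fin N) (Fin N) ℍ[ℝ]}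
    (ha : ∀ n m, a n m = (a m n)ᴴ) (α : ℕ → Matrix (Fin N) (Fin N) ℍ[ℝ]) (n m : ℕ) :
    (bCoef α a m n)ᴴ = bCoef α a n m := by
  simp only [bCoef, conjTranspose_sum, conjTranspose_mul, conjTranspose_conjTranspose, ← ha,
    Matrix.mul_assoc]
  exact Finset.sum_comm

end Summability

/-- **Proposition**: multiplying a Hermitian kernel `K(p,q) = Σ pⁿ a_{n,m} q̄^m` by a
slice hyperholomorphic function `α(p) = Σ pⁿ αₙ` with `α₀ invertible`, i.e. forming
`B(p,q) = α(p) ⋆ K(p,q) ⋆_r α(q)*` with coefficients `b_{n,m}`, preserves hermitianity,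
convergence, and the number of negative squares in `B_ρ`. -/
theorem negSquares_mul_invertible {N : ℕ}
    (a : ℕ → ℕ → Matrix (Fin N) (Fin N) ℍ[ℝ])
    (ha : ∀ n m, a n m = (a m n)ᴴ) (ρ : ℝ) (hρ : 0 < ρ)
    (hsum : Summable fun nm : ℕ × ℕ => ‖a nm.1 nm.2‖ * ρ ^ (nm.1 + nm.2))
    (α : ℕ → Matrix (Fin N) (Fin N) ℍ[ℝ])
    (hαsum : Summable fun n : ℕ => ‖α n‖ * ρ ^ n)
    (hα0 : IsUnit (α 0)) :
    (∀ n m, bCoef α a n m = (bCoef α a m n)ᴴ) ∧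
    (Summable fun nm : ℕ × ℕ => ‖bCoef α a nm.1 nm.2‖ * ρ ^ (nm.1 + nm.2)) ∧
    ∀ κ : ℕ, (hasNegSquares (bCoef α a) ρ κ ↔ hasNegSquares a ρ κ) := by
  have hbsum := summable_norm_bCoef hρ.le hsum hαsum
  exact ⟨fun n m => (bCoef_conjTranspose ha α n m).symm, hbsum,
    fun κ => hasNegSquares_bCoef_iff hα0 hsum hbsum hρ⟩
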